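/- Let K be a field of characteristic p > 0, let a, b ∈ ℕ^m with a ≠ b and a_i + b_i ≥ 1 for every i, and let f = u_1 x^a + u_2 x^b with u_1, u_2 ∈ K nonzero. Suppose the splitting polytope P has a unique maximal point η = (η_1, η_2) with η_1 + η_2 ≤ 1, and suppose η_1^(e) + η_2^(e) ≤ p−1 for every e ≥ 1 (i.e., η_1 and η_2 add without carrying in base p). Then the F-pure threshold of f at m = (x_1,…,x_m) equals η_1 + η_2; that is, ν_f(p^e)/p^e converges to η_1 + η_2. -/

import Mathlib

/-!
Write `q = p ^ e`. Expanding `f ^ l` by the binomial theorem gives the monomials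
`x ^ (k a + (l - k) b)` for `0 ≤ k ≤ l`, and these are pairwise distinct because `a ≠ b`. The ideal
`m^[q]` is monomial: it consists of the polynomials all of whose monomials have some exponent `≥ q`.

Upper bound (`le_of_not_mem`): if `f ^ l ∉ m^[q]`, some `x ^ (k a + (l - k) b)` has all exponents
`< q`, so `(k / q, (l - k) / q)` lies in the splitting polytope and `l / q ≤ η₁ + η₂`.

Lower bound: let `nⱼ = q ⟨ηⱼ⟩ₑ`, an integer which is `< q ηⱼ` unless `ηⱼ = 0`. Then
`x ^ (n₁ a + n₂ b)` has all exponents `< q`, and its coefficient in `f ^ (n₁ + n₂)` is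
`u₁ ^ n₁ u₂ ^ n₂ (n₁ + n₂ choose n₁)`. The digits of `n₁` and `n₂` add without carrying, so by
Lucas' theorem (`not_dvd_choose`) the binomial coefficient is prime to `p`. Hence
`ν_f(q) ≥ n₁ + n₂ ≥ q (η₁ + η₂) - 2`, and the two bounds squeeze `ν_f(q) / q` to `η₁ + η₂`.
-/

/-- The `q`-th Frobenius power `m^[q]` of the maximal ideal generated by the variables. -/
noncomputable def frobeniusPower (K : Type*) [CommRing K] (σ : Type*) (q : ℕ) :
    Ideal (MvPolynomial σ K) :=
  Ideal.span (Set.range fun i : σ => (MvPolynomial.X i : MvPolynomial σ K) ^ q)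

/-- `ν_f(q) = max { l : f ^ l ∉ m^[q] }`. -/
noncomputable def nu {K : Type*} [CommRing K] {σ : Type*} (f : MvPolynomial σ K) (q : ℕ) : ℕ :=
  sSup {l : ℕ | f ^ l ∉ frobeniusPower K σ q}


/-- The splitting polytope of the pair of exponent vectors `a, b : Fin m → ℕ`. -/
def splittingPolytope {m : ℕ} (a b : Fin m → ℕ) : Set (ℝ × ℝ) :=
  {s | 0 ≤ s.1 ∧ 0 ≤ s.2 ∧ ∀ i, (a i : ℝ) * s.1 + (b i : ℝ) * s.2 ≤ 1}

/-- The lower interior of the splitting polytope. -/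
def lowerInterior {m : ℕ} (a b : Fin m → ℕ) : Set (ℝ × ℝ) :=
  {s | 0 ≤ s.1 ∧ 0 ≤ s.2 ∧ ∀ i, (a i : ℝ) * s.1 + (b i : ℝ) * s.2 < 1}

/-- `η` is a maximal point of the splitting polytope: it maximizes the coordinate sum. -/
def isMaxPoint {m : ℕ} (a b : Fin m → ℕ) (η : ℝ × ℝ) : Prop :=
  η ∈ splittingPolytope a b ∧ ∀ s ∈ splittingPolytope a b, s.1 + s.2 ≤ η.1 + η.2


/-- The `e`-th truncation of `α ∈ (0,1]` in base `p`; by convention `⟨0⟩ₑ = 0`. -/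
noncomputable def trunc (p e : ℕ) (α : ℝ) : ℝ :=
  if α = 0 then 0 else (⌈(p : ℝ) ^ e * α⌉ - 1) / (p : ℝ) ^ e

/-- The `e`-th digit (for `e ≥ 1`) of the non-terminating base-`p` expansion of `α`. -/
noncomputable def digit (p e : ℕ) (α : ℝ) : ℝ :=
  (p : ℝ) ^ e * (trunc p e α - trunc p (e - 1) α)

open MvPolynomial

/-! ### Powers of a binomial modulo Frobenius powers -/

lemma mem_frobeniusPower_iff {K σ : Type*} [CommRing K] (q : ℕ) (g : MvPolynomial σ K) :
    g ∈ frobeniusPower K σ q ↔ ∀ d ∈ g.support, ∃ i, q ≤ d i := by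
  have h : frobeniusPower K σ q = Ideal.span
      ((fun s => monomial s (1 : K)) '' Set.range fun i : σ => Finsupp.single i q) := by
    unfold frobeniusPower
    congr 1
    rw [← Set.range_comp]
    congr 1
    funext i
    simp [X_pow_eq_monomial]
  rw [h, mem_ideal_span_monomial_image]
  simp

lemma binomial_pow {K σ : Type*} [CommRing K] (A B : σ →₀ ℕ) (u v : K) (l : ℕ) :
    (monomial A u + monomial B v) ^ l = ∑ k ∈ Finset.range (l + 1),
      monomial (k • A + (l - k) • B) (u ^ k * v ^ (l - k) * (l.choose k : K)) := by
  rw [add_pow]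
  refine Finset.sum_congr rfl fun k _ => ?_
  rw [monomial_pow, monomial_pow, monomial_mul, ← map_natCast (C : K →+* MvPolynomial σ K),
    mul_comm _ (C _), C_mul_monomial, mul_comm ((l.choose k : ℕ) : K)]

/-- Two exponents `k, n ≤ l` giving the same monomial in the expansion of `f ^ l` agree. -/
lemma exponent_inj {σ : Type*} {A B : σ →₀ ℕ} (hAB : A ≠ B) {l k n : ℕ} (hk : k ≤ l) (hn : n ≤ l)
    (h : k • A + (l - k) • B = n • A + (l - n) • B) : k = n := by
  obtain ⟨i, hi⟩ := DFunLike.ne_iff.mp hAB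
  have hi' := DFunLike.congr_fun h i
  simp only [Finsupp.coe_add, Finsupp.coe_smul, Pi.add_apply, Pi.smul_apply, smul_eq_mul] at hi'
  zify [hk, hn] at hi' hi ⊢
  have : ((k : ℤ) - n) * ((A i : ℤ) - B i) = 0 := by linear_combination hi'
  rcases mul_eq_zero.mp this with h | h
  · linarith
  · exact absurd (by linarith) hi

lemma coeff_binomial_pow {K σ : Type*} [CommRing K] {A B : σ →₀ ℕ} (hAB : A ≠ B) (u v : K)
    (n₁ n₂ : ℕ) :
    coeff (n₁ • A + n₂ • B) ((monomial A u + monomial B v) ^ (n₁ + n₂)) =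
      u ^ n₁ * v ^ n₂ * ((n₁ + n₂).choose n₁ : K) := by
  classical
  rw [binomial_pow, coeff_sum, Finset.sum_eq_single n₁]
  · simp
  · intro k hk hne
    rw [coeff_monomial, if_neg]
    intro h
    refine hne (exponent_inj hAB (Nat.lt_succ_iff.mp (Finset.mem_range.mp hk))
      (Nat.le_add_right n₁ n₂) ?_)
    simpa using h
  · intro h
    exact absurd (Finset.mem_range.mpr (by omega)) h

lemma exists_exponent_lt {K σ : Type*} [CommRing K] {A B : σ →₀ ℕ} {u v : K} {l q : ℕ}
    (h : (monomial A u + monomial B v) ^ l ∉ frobeniusPower K σ q) :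
    ∃ k ≤ l, ∀ i, k * A i + (l - k) * B i < q := by
  by_contra! hc
  refine h ?_
  rw [binomial_pow]
  refine Ideal.sum_mem _ fun k hk => ?_
  obtain ⟨i, hi⟩ := hc k (Nat.lt_succ_iff.mp (Finset.mem_range.mp hk))
  rw [mem_frobeniusPower_iff]
  intro d hd
  have := Finset.mem_singleton.mp (support_monomial_subset hd)
  exact ⟨i, by simpa [this] using hi⟩

/-- If `f ^ l ∉ m^[q]`, then `l / q` is the coordinate sum of a point of the splitting polytope, so
it is at most the maximum `η₁ + η₂`. -/
lemma le_of_not_mem {K : Type*} [CommRing K] {m : ℕ} {a b : Fin m → ℕ} {η : ℝ × ℝ}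
    (hη : isMaxPoint a b η) {A B : Fin m →₀ ℕ} (hA : ∀ i, A i = a i) (hB : ∀ i, B i = b i)
    {u v : K} {l q : ℕ} (hq : 0 < q)
    (h : (monomial A u + monomial B v) ^ l ∉ frobeniusPower K (Fin m) q) :
    (l : ℝ) ≤ q * (η.1 + η.2) := by
  obtain ⟨k, hk, hlt⟩ := exists_exponent_lt h
  have hq' : (0 : ℝ) < q := by exact_mod_cast hq
  have := hη.2 ((k : ℝ) / q, ((l - k : ℕ) : ℝ) / q) ⟨by positivity, by positivity, fun i => by
    have h1 : ((k * A i + (l - k) * B i : ℕ) : ℝ) ≤ q := by exact_mod_cast (hlt i).le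
    rw [hA, hB] at h1
    push_cast only [Nat.cast_add, Nat.cast_mul] at h1
    have : (a i : ℝ) * (k / q) + b i * (((l - k : ℕ) : ℝ) / q) =
        (k * a i + ((l - k : ℕ) : ℝ) * b i) / q := by ring
    simp only [this]
    rwa [div_le_one hq']⟩
  simp only at this
  rw [← add_div, div_le_iff₀ hq', Nat.cast_sub hk] at this
  linarith

/-! ### Truncated base-`p` expansions -/

/-- The integer `p ^ e ⟨α⟩ₑ`. Truncated subtraction makes it `0` at `α = 0`, as the convention for
`trunc` requires. -/
noncomputable def truncNum (p e : ℕ) (α : ℝ) : ℕ := ⌈(p : ℝ) ^ e * α⌉₊ - 1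

lemma truncNum_eq {p : ℕ} (hp : 0 < p) (e : ℕ) {α : ℝ} (hα : 0 ≤ α) :
    (truncNum p e α : ℝ) = (p : ℝ) ^ e * trunc p e α := by
  have hp' : (0 : ℝ) < (p : ℝ) ^ e := by positivity
  unfold truncNum trunc
  split_ifs with h
  · simp [h]
  · have h0 : 0 < (p : ℝ) ^ e * α := by positivity
    have h1 : 1 ≤ ⌈(p : ℝ) ^ e * α⌉₊ := Nat.ceil_pos.mpr h0
    rw [Nat.cast_sub h1, natCast_ceil_eq_intCast_ceil h0.le]
    field_simp
    simp

lemma truncNum_lt {p : ℕ} (hp : 0 < p) (e : ℕ) {α : ℝ} (hα : 0 < α) :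
    (truncNum p e α : ℝ) < (p : ℝ) ^ e * α := by
  have h0 : 0 < (p : ℝ) ^ e * α := by positivity
  refine Nat.lt_ceil.mp ?_
  have := Nat.ceil_pos.mpr h0
  unfold truncNum
  omega

lemma truncNum_le {p : ℕ} (hp : 0 < p) (e : ℕ) {α : ℝ} (hα : 0 ≤ α) :
    (truncNum p e α : ℝ) ≤ (p : ℝ) ^ e * α := by
  rcases hα.eq_or_lt with rfl | h
  · simp [truncNum]
  · exact (truncNum_lt hp e h).le

lemma le_truncNum_add_one (p e : ℕ) (α : ℝ) :
    (p : ℝ) ^ e * α ≤ truncNum p e α + 1 := by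
  refine (Nat.le_ceil _).trans ?_
  have : ⌈(p : ℝ) ^ e * α⌉₊ ≤ truncNum p e α + 1 := by
    unfold truncNum
    omega
  exact_mod_cast this

/-- Digits of the non-terminating expansion are nonnegative. -/
lemma mul_truncNum_le {p : ℕ} (hp : 0 < p) (e : ℕ) {α : ℝ} (hα : 0 ≤ α) :
    p * truncNum p e α ≤ truncNum p (e + 1) α := by
  rcases hα.eq_or_lt with rfl | h
  · simp [truncNum]
  · have h1 := truncNum_lt hp e h
    have hp' : (0 : ℝ) < p := by exact_mod_cast hp
    have h2 : ((p * truncNum p e α : ℕ) : ℝ) < (p : ℝ) ^ (e + 1) * α := by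
      push_cast
      rw [pow_succ', mul_assoc]
      exact mul_lt_mul_of_pos_left h1 hp'
    have := Nat.lt_ceil.mpr h2
    rw [show truncNum p (e + 1) α = ⌈(p : ℝ) ^ (e + 1) * α⌉₊ - 1 from rfl]
    omega

lemma digit_succ_eq {p : ℕ} (hp : 0 < p) (e : ℕ) {α : ℝ} (hα : 0 ≤ α) :
    digit p (e + 1) α = truncNum p (e + 1) α - p * truncNum p e α := by
  rw [digit, truncNum_eq hp _ hα, truncNum_eq hp _ hα, Nat.add_sub_cancel]
  ring

/-! ### Binomial coefficients without carrying -/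

/-- One step of Lucas' theorem for a sum whose lowest digits do not carry. -/
lemma not_dvd_choose_step {p : ℕ} (hp : p.Prime) {x y c d : ℕ} (hcd : c + d < p)
    (h : ¬ p ∣ (x + y).choose x) :
    ¬ p ∣ ((p * x + c) + (p * y + d)).choose (p * x + c) := by
  have := Fact.mk hp
  have hc : c < p := by omega
  have hl := Choose.choose_modEq_choose_mod_mul_choose_div_nat
    (n := (p * x + c) + (p * y + d)) (k := p * x + c) (p := p)
  have e1 : (p * x + c) + (p * y + d) = p * (x + y) + (c + d) := by ring
  rw [e1, Nat.mul_add_mod, Nat.mul_add_mod, Nat.mod_eq_of_lt hcd, Nat.mod_eq_of_lt hc,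
    Nat.mul_add_div hp.pos, Nat.mul_add_div hp.pos, Nat.div_eq_of_lt hcd,
    Nat.div_eq_of_lt hc, add_zero, add_zero] at hl
  rw [e1, hl.dvd_iff dvd_rfl, hp.dvd_mul]
  rintro (h1 | h1)
  · have h2 : (c + d).choose c ∣ (c + d).factorial :=
      ⟨c.factorial * d.factorial, by
        have := Nat.choose_mul_factorial_mul_factorial (Nat.le_add_right c d)
        rw [Nat.add_sub_cancel_left, mul_assoc] at this
        exact this.symm⟩
    have := (hp.dvd_factorial).mp (h1.trans h2)
    omega
  · exact h h1

lemma not_dvd_choose {p : ℕ} (hp : p.Prime) {α β : ℝ} (hα : 0 ≤ α) (hβ : 0 ≤ β)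
    (hα1 : α ≤ 1) (hβ1 : β ≤ 1)
    (hnc : ∀ e : ℕ, 1 ≤ e → digit p e α + digit p e β ≤ (p : ℝ) - 1) (e : ℕ) :
    ¬ p ∣ (truncNum p e α + truncNum p e β).choose (truncNum p e α) := by
  induction e with
  | zero =>
    have h0 : ∀ γ : ℝ, γ ≤ 1 → truncNum p 0 γ = 0 := fun γ hγ => by
      have : ⌈γ⌉₊ ≤ 1 := Nat.ceil_le.mpr (by simpa using hγ)
      simp only [truncNum, pow_zero, one_mul]
      omega
    rw [h0 α hα1, h0 β hβ1]
    simpa using hp.one_lt.ne'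
  | succ e ih =>
    obtain ⟨c, hc⟩ := Nat.exists_eq_add_of_le (mul_truncNum_le hp.pos e hα)
    obtain ⟨d, hd⟩ := Nat.exists_eq_add_of_le (mul_truncNum_le hp.pos e hβ)
    have h := hnc (e + 1) (by omega)
    rw [digit_succ_eq hp.pos e hα, digit_succ_eq hp.pos e hβ, hc, hd] at h
    push_cast at h
    have hcd : c + d < p := by
      have : ((c + d : ℕ) : ℝ) < p := by
        push_cast
        linarith
      exact_mod_cast this
    rw [hc, hd]
    exact not_dvd_choose_step hp hcd ih

/-! ### Geometry of the splitting polytope -/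

/-- A coordinate of a maximal point is at most `1`: the exponent vector it multiplies is nonzero,
since otherwise the polytope would be unbounded in that direction. -/
lemma isMaxPoint.coords_le_one {m : ℕ} {a b : Fin m → ℕ} {η : ℝ × ℝ} (hη : isMaxPoint a b η) :
    η.1 ≤ 1 ∧ η.2 ≤ 1 := by
  obtain ⟨⟨h1, h2, h3⟩, hmax⟩ := hη
  constructor
  · by_cases ha : ∀ i, a i = 0
    · have := hmax (η.1 + 1, η.2) ⟨by simp only; linarith, h2, fun i => by simpa [ha] using h3 i⟩
      simp only at this
      linarith
    · push Not at ha
      obtain ⟨i, hi⟩ := ha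
      have hi' : (1 : ℝ) ≤ a i := by exact_mod_cast Nat.one_le_iff_ne_zero.mpr hi
      nlinarith [h3 i, mul_nonneg (Nat.cast_nonneg (α := ℝ) (b i)) h2]
  · by_cases hb : ∀ i, b i = 0
    · have := hmax (η.1, η.2 + 1) ⟨h1, by simp only; linarith, fun i => by simpa [hb] using h3 i⟩
      simp only at this
      linarith
    · push Not at hb
      obtain ⟨i, hi⟩ := hb
      have hi' : (1 : ℝ) ≤ b i := by exact_mod_cast Nat.one_le_iff_ne_zero.mpr hi
      nlinarith [h3 i, mul_nonneg (Nat.cast_nonneg (α := ℝ) (a i)) h1]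

/-- Truncating both coordinates moves a point of the polytope strictly inside each face
`a_i s_1 + b_i s_2 = 1`, because the expansions are non-terminating. -/
lemma truncNum_exponent_lt {m p : ℕ} (hp : 0 < p) {a b : Fin m → ℕ} {η : ℝ × ℝ}
    (hη : η ∈ splittingPolytope a b) (e : ℕ) (i : Fin m) :
    truncNum p e η.1 * a i + truncNum p e η.2 * b i < p ^ e := by
  obtain ⟨h1, h2, h3⟩ := hη
  have hq : (0 : ℝ) < (p : ℝ) ^ e := by positivity
  -- A summand that is zero after truncation causes no loss; a nonzero one drops strictly.
  have key : ∀ (c : ℕ) (α : ℝ), 0 ≤ α → (truncNum p e α * c : ℝ) ≤ (p : ℝ) ^ e * (c * α) ∧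
      ((truncNum p e α * c : ℝ) < (p : ℝ) ^ e * (c * α) ∨ (truncNum p e α * c : ℝ) = 0) := by
    intro c α hα
    have hle := truncNum_le hp e hα
    refine ⟨by nlinarith [Nat.cast_nonneg (α := ℝ) c], ?_⟩
    rcases hα.eq_or_lt with rfl | h
    · right
      simp [truncNum]
    · rcases Nat.eq_zero_or_pos c with rfl | hc
      · right
        simp
      · left
        have hc' : (0 : ℝ) < c := by exact_mod_cast hc
        have := mul_lt_mul_of_pos_right (truncNum_lt hp e h) hc'
        linarith
  have hi := mul_le_mul_of_nonneg_left (h3 i) hq.le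
  have k1 := key (a i) η.1 h1
  have k2 := key (b i) η.2 h2
  have : ((truncNum p e η.1 * a i + truncNum p e η.2 * b i : ℕ) : ℝ) < (p : ℝ) ^ e := by
    push_cast
    rcases k1 with ⟨k1, k1' | k1'⟩ <;> rcases k2 with ⟨k2, k2' | k2'⟩ <;> linarith
  exact_mod_cast this

/-! ### The limit -/

theorem stmt_14 {K : Type*} [Field K] (p : ℕ) [Fact p.Prime] [CharP K p]
    {m : ℕ} (a b : Fin m → ℕ) (hab : a ≠ b) (hvar : ∀ i, 1 ≤ a i + b i)
    (u1 u2 : K) (hu1 : u1 ≠ 0) (hu2 : u2 ≠ 0)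
    (η : ℝ × ℝ) (hη : isMaxPoint a b η) (huniq : ∀ s, isMaxPoint a b s → s = η)
    (hsum : η.1 + η.2 ≤ 1)
    (hnocarry : ∀ e : ℕ, 1 ≤ e → digit p e η.1 + digit p e η.2 ≤ (p : ℝ) - 1) :
    Filter.Tendsto (fun e : ℕ =>
        (nu (MvPolynomial.C u1 * ∏ i, MvPolynomial.X i ^ a i +
             MvPolynomial.C u2 * ∏ i, MvPolynomial.X i ^ b i) (p ^ e) : ℝ) / (p : ℝ) ^ e)
      Filter.atTop (nhds (η.1 + η.2)) := by
  have hp : p.Prime := Fact.out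
  obtain ⟨h1, h1'⟩ := hη.coords_le_one
  have hη1 := hη.1.1
  have hη2 := hη.1.2.1
  set A : Fin m →₀ ℕ := Finsupp.equivFunOnFinite.symm a with hA
  set B : Fin m →₀ ℕ := Finsupp.equivFunOnFinite.symm b with hB
  have hAB : A ≠ B := fun h => hab (Finsupp.equivFunOnFinite.symm.injective h)
  have hmon : ∀ (c : Fin m → ℕ) (u : K), MvPolynomial.C u * ∏ i, MvPolynomial.X i ^ c i =
      monomial (Finsupp.equivFunOnFinite.symm c) u := by
    intro c u
    rw [monomial_eq, Finsupp.prod_fintype _ _ (by simp)]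
    simp
  rw [hmon, hmon, ← hA, ← hB]
  have hqpos : ∀ e : ℕ, (0 : ℝ) < (p : ℝ) ^ e := fun e => pow_pos (by exact_mod_cast hp.pos) e
  have hub : ∀ (e l : ℕ), (monomial A u1 + monomial B u2) ^ l ∉ frobeniusPower K (Fin m) (p ^ e) →
      (l : ℝ) ≤ (p : ℝ) ^ e * (η.1 + η.2) := by
    intro e l h
    have := le_of_not_mem hη (fun _ => rfl) (fun _ => rfl) (pow_pos hp.pos e) h
    push_cast at this
    exact this
  have hmem : ∀ e, (monomial A u1 + monomial B u2) ^ (truncNum p e η.1 + truncNum p e η.2) ∉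
      frobeniusPower K (Fin m) (p ^ e) := by
    intro e h
    rw [mem_frobeniusPower_iff] at h
    obtain ⟨i, hi⟩ := h (truncNum p e η.1 • A + truncNum p e η.2 • B) (by
      rw [mem_support_iff, coeff_binomial_pow hAB]
      refine mul_ne_zero (mul_ne_zero (pow_ne_zero _ hu1) (pow_ne_zero _ hu2)) ?_
      rw [Ne, CharP.cast_eq_zero_iff K p]
      exact not_dvd_choose hp hη1 hη2 h1 h1' hnocarry e)
    exact absurd (truncNum_exponent_lt hp.pos hη.1 e i) (not_lt.mpr hi)
  have hbdd : ∀ e, BddAbove {l : ℕ | (monomial A u1 + monomial B u2) ^ l ∉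
      frobeniusPower K (Fin m) (p ^ e)} := fun e =>
    ⟨⌊(p : ℝ) ^ e * (η.1 + η.2)⌋₊, fun l hl => Nat.le_floor (hub e l hl)⟩
  have hlim : Filter.Tendsto (fun e : ℕ => (η.1 + η.2) - 2 / (p : ℝ) ^ e) Filter.atTop
      (nhds (η.1 + η.2)) := by
    have h : Filter.Tendsto (fun e : ℕ => 2 / (p : ℝ) ^ e) Filter.atTop (nhds 0) :=
      (tendsto_pow_atTop_atTop_of_one_lt (by exact_mod_cast hp.one_lt)).const_div_atTop 2
    simpa using h.const_sub (η.1 + η.2)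
  refine tendsto_of_tendsto_of_tendsto_of_le_of_le hlim tendsto_const_nhds
    (fun e => ?_) (fun e => ?_)
  · have hle : ((truncNum p e η.1 + truncNum p e η.2 : ℕ) : ℝ) ≤
        nu (monomial A u1 + monomial B u2) (p ^ e) := by
      exact_mod_cast le_csSup (hbdd e) (hmem e)
    push_cast at hle
    have l1 := le_truncNum_add_one p e η.1
    have l2 := le_truncNum_add_one p e η.2
    simp only
    rw [le_div_iff₀ (hqpos e), sub_mul, div_mul_cancel₀ _ (hqpos e).ne']
    linarith
  · have := hub e _ (Nat.sSup_mem ⟨_, hmem e⟩ (hbdd e))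
    simp only
    rw [div_le_iff₀ (hqpos e), mul_comm]
    exact this
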